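/- arXiv:1012.0995 — 2 statements merged into one kernel-verified Lean document; each statement's English description precedes it below -/
import Mathlib

section
/- Let k ≥ 1 and n = 2k+1. A binary n-string s of weight k satisfies support(s) ⊆ support(ℵ(s)) if and only if s(k) = false and s(k−j) = ¬ s(k+j) for every j ≢ 0 (mod n), i.e., iff s is of the form b̄_k…b̄_1 0 b_1…b_k; moreover in that case support(ℵ(s)) = support(s) ∪ {k}, so s and ℵ(s) are adjacent in M_k. The number of such strings is exactly 2^k; hence the reduced graph R_k has exactly 2^k loops. -/
/-!
The map `i ↦ 2k - i` is an involution of `ZMod (2k+1)` whose only fixed point is the centre `k`.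
Complementation gives `wt ℵ(s) = 2k + 1 - wt s`, so for `wt s = k` the support of `ℵ(s)` has one
element more than that of `s`. If `supp s ⊆ supp ℵ(s)`, the value at the centre must be `0`, so the
extra element is `k` and `supp ℵ(s) = supp s ∪ {k}` (`supp_aleph_eq_insert`); read away from the
centre, this equation is the symmetry `s (2k - i) = ¬ s i` (`IsAntipal`). Conversely
the symmetry gives `supp ℵ(s) = supp s ∪ {k}`, which forces the weight to be `k`
(`wt_of_isAntipal`). A string with the symmetry is determined by its first `k` letters, which are
arbitrary (`range_extendHalf`), so there are `2 ^ k` of them.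
-/

/-- The support of a binary `(2k+1)`-string. -/
def supp (k : ℕ) (s : ZMod (2*k+1) → Bool) : Finset (ZMod (2*k+1)) :=
  Finset.univ.filter fun i => s i = true

/-- The weight of a binary `(2k+1)`-string. -/
def wt (k : ℕ) (s : ZMod (2*k+1) → Bool) : ℕ := (supp k s).card

/-- The complemented reversal `ℵ`: `ℵ(s)(i) = ¬ s(2k − i)`. -/
def aleph (k : ℕ) (s : ZMod (2*k+1) → Bool) : ZMod (2*k+1) → Bool :=
  fun i => !(s (((2*k : ℕ) : ZMod (2*k+1)) - i))

/-- The explicit form `b̄_k … b̄_1 0 b_1 … b_k`, written with the reflection `i ↦ 2k - i` instead of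
the displacement `j = i - k` from the centre. -/
def IsAntipal (k : ℕ) (s : ZMod (2*k+1) → Bool) : Prop :=
  s (k : ZMod (2*k+1)) = false ∧
    ∀ i : ZMod (2*k+1), i ≠ (k : ZMod (2*k+1)) → s (((2*k : ℕ) : ZMod (2*k+1)) - i) = !s i

/-- The string whose first `k` letters are `b`, with `0` at the centre and the complemented
reversal of `b` after it. -/
def extendHalf (k : ℕ) (b : Fin k → Bool) : ZMod (2*k+1) → Bool := fun i =>
  if h : i.val < k then b ⟨i.val, h⟩
  else if h' : k < i.val then !b ⟨2*k - i.val, by have := ZMod.val_lt i; omega⟩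
  else false

lemma val_reflect (k : ℕ) (i : ZMod (2*k+1)) :
    (((2*k : ℕ) : ZMod (2*k+1)) - i).val = 2*k - i.val := by
  have hi := ZMod.val_lt i
  have h2 : ((2*k : ℕ) : ZMod (2*k+1)).val = 2*k := ZMod.val_cast_of_lt (by omega)
  rw [ZMod.val_sub (by omega), h2]

lemma val_centre (k : ℕ) : (k : ZMod (2*k+1)).val = k := ZMod.val_cast_of_lt (by omega)

lemma eq_centre_iff (k : ℕ) (i : ZMod (2*k+1)) : i = (k : ZMod (2*k+1)) ↔ i.val = k := by
  rw [← (ZMod.val_injective (2*k+1)).eq_iff, val_centre]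

lemma mem_supp (k : ℕ) (s : ZMod (2*k+1) → Bool) (i : ZMod (2*k+1)) :
    i ∈ supp k s ↔ s i = true := by
  simp [supp]

lemma reflect_centre (k : ℕ) :
    ((2*k : ℕ) : ZMod (2*k+1)) - (k : ZMod (2*k+1)) = (k : ZMod (2*k+1)) := by
  push_cast; ring

lemma isAntipal_iff (k : ℕ) (s : ZMod (2*k+1) → Bool) :
    IsAntipal k s ↔ (s (k : ZMod (2*k+1)) = false ∧
          ∀ j : ZMod (2*k+1), j ≠ 0 →
            s ((k : ZMod (2*k+1)) - j) = !s ((k : ZMod (2*k+1)) + j)) := by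
  refine and_congr_right fun _ => ⟨fun h j hj => ?_, fun h i hi => ?_⟩
  · rw [← h _ (show (k : ZMod (2*k+1)) + j ≠ k by simpa using hj)]
    congr 1; push_cast; ring
  · have := h (i - k) (sub_ne_zero.2 hi)
    rw [add_sub_cancel] at this
    rw [← this]
    congr 1; push_cast; ring

lemma wt_aleph (k : ℕ) (s : ZMod (2*k+1) → Bool) :
    (supp k (aleph k s)).card + wt k s = 2*k+1 := by
  have h : (supp k (aleph k s)).card = (supp k s)ᶜ.card := by
    refine Finset.card_nbij' (fun i => ((2*k : ℕ) : ZMod (2*k+1)) - i)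
      (fun i => ((2*k : ℕ) : ZMod (2*k+1)) - i) ?_ ?_ ?_ ?_
    · intro i hi; simpa [supp, aleph] using hi
    · intro i hi; simpa [supp, aleph] using hi
    · intro i _; simp
    · intro i _; simp
  have := Finset.card_add_card_compl (supp k s)
  rw [ZMod.card] at this
  unfold wt
  omega

lemma centre_of_subset {k : ℕ} {s : ZMod (2*k+1) → Bool}
    (h : supp k s ⊆ supp k (aleph k s)) : s (k : ZMod (2*k+1)) = false := by
  by_contra hc
  have hc' : s (k : ZMod (2*k+1)) = true := by simpa using hc
  have := h ((mem_supp k s _).2 hc')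
  rw [mem_supp, aleph, reflect_centre, hc'] at this
  simp at this

lemma supp_aleph_eq_insert {k : ℕ} {s : ZMod (2*k+1) → Bool} (hw : wt k s = k)
    (h : supp k s ⊆ supp k (aleph k s)) :
    supp k (aleph k s) = insert (k : ZMod (2*k+1)) (supp k s) := by
  have hc := centre_of_subset h
  have hn : (k : ZMod (2*k+1)) ∉ supp k s := by simp [mem_supp, hc]
  symm
  apply Finset.eq_of_subset_of_card_le
  · refine Finset.insert_subset ?_ h
    rw [mem_supp, aleph, reflect_centre, hc]; rfl
  · rw [Finset.card_insert_of_notMem hn]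
    have := wt_aleph k s
    unfold wt at *
    omega

lemma isAntipal_of_subset {k : ℕ} {s : ZMod (2*k+1) → Bool} (hw : wt k s = k)
    (h : supp k s ⊆ supp k (aleph k s)) : IsAntipal k s := by
  refine ⟨centre_of_subset h, fun i hi => ?_⟩
  have := congrArg (i ∈ ·) (supp_aleph_eq_insert hw h)
  simp only [mem_supp, Finset.mem_insert, hi, false_or, aleph, eq_iff_iff] at this
  cases h1 : s i <;> simp_all

lemma IsAntipal.supp_aleph {k : ℕ} {s : ZMod (2*k+1) → Bool} (h : IsAntipal k s) :
    supp k (aleph k s) = insert (k : ZMod (2*k+1)) (supp k s) := by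
  ext i
  by_cases hi : i = (k : ZMod (2*k+1))
  · subst hi
    rw [mem_supp, aleph, reflect_centre, h.1]; simp
  · rw [mem_supp, Finset.mem_insert, mem_supp, aleph, h.2 i hi]; simp [hi]

lemma wt_of_isAntipal {k : ℕ} {s : ZMod (2*k+1) → Bool} (h : IsAntipal k s) : wt k s = k := by
  have hn : (k : ZMod (2*k+1)) ∉ supp k s := by simp [mem_supp, h.1]
  have := wt_aleph k s
  rw [h.supp_aleph, Finset.card_insert_of_notMem hn] at this
  unfold wt at *
  omega

lemma subset_of_isAntipal {k : ℕ} {s : ZMod (2*k+1) → Bool} (h : IsAntipal k s) :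
    supp k s ⊆ supp k (aleph k s) := by
  rw [h.supp_aleph]; exact Finset.subset_insert _ _

lemma extendHalf_injective (k : ℕ) : Function.Injective (extendHalf k) := by
  intro b b' h
  funext j
  have hj := j.2
  have hv : ((j : ℕ) : ZMod (2*k+1)).val = j := ZMod.val_cast_of_lt (by omega)
  have := congrFun h ((j : ℕ) : ZMod (2*k+1))
  simpa [extendHalf, hv] using this

lemma isAntipal_extendHalf (k : ℕ) (b : Fin k → Bool) : IsAntipal k (extendHalf k b) := by
  refine ⟨by unfold extendHalf; simp only [val_centre]; simp, fun i hi => ?_⟩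
  rw [Ne, eq_centre_iff] at hi
  have hlt := ZMod.val_lt i
  unfold extendHalf
  simp only [val_reflect]
  rcases Nat.lt_or_gt_of_ne hi with h | h
  · have h1 : ¬ 2*k - i.val < k := by omega
    have h2 : k < 2*k - i.val := by omega
    have h3 : 2*k - (2*k - i.val) = i.val := by omega
    simp [h, h1, h2, h3]
  · have h1 : 2*k - i.val < k := by omega
    have h2 : ¬ i.val < k := by omega
    simp [h, h1, h2]

lemma range_extendHalf (k : ℕ) : Set.range (extendHalf k) = {s | IsAntipal k s} := by
  ext s
  refine ⟨?_, fun h => ⟨fun j => s ((j : ℕ) : ZMod (2*k+1)), ?_⟩⟩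
  · rintro ⟨b, rfl⟩; exact isAntipal_extendHalf k b
  · funext i
    have hlt := ZMod.val_lt i
    unfold extendHalf
    split_ifs with h1 h2
    · simp
    · have hi : i ≠ (k : ZMod (2*k+1)) := by rw [Ne, eq_centre_iff]; omega
      have := h.2 i hi
      simp only [← val_reflect, ZMod.natCast_zmod_val, this, Bool.not_not]
    · rw [(eq_centre_iff k i).2 (by omega), h.1]


/-- A weight-`k` string `s` is antipalindromic (`support s ⊆ support ℵ(s)`) iff
it has the form `b̄_k…b̄_1 0 b_1…b_k`; in that case
`support ℵ(s) = support s ∪ {k}` (so `s` and `ℵ(s)` are adjacent in `M_k`),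
and there are exactly `2^k` such strings: `R_k` has exactly `2^k` loops. -/
theorem stmt11 (k : ℕ) (hk : 1 ≤ k) :
    (∀ s : ZMod (2*k+1) → Bool, wt k s = k →
      (supp k s ⊆ supp k (aleph k s) ↔
        (s (k : ZMod (2*k+1)) = false ∧
          ∀ j : ZMod (2*k+1), j ≠ 0 →
            s ((k : ZMod (2*k+1)) - j) = !s ((k : ZMod (2*k+1)) + j)))) ∧
    (∀ s : ZMod (2*k+1) → Bool, wt k s = k → supp k s ⊆ supp k (aleph k s) →
      supp k (aleph k s) = insert (k : ZMod (2*k+1)) (supp k s) ∧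
      supp k s ⊂ supp k (aleph k s)) ∧
    {s : ZMod (2*k+1) → Bool | wt k s = k ∧ supp k s ⊆ supp k (aleph k s)}.ncard
      = 2 ^ k := by
  refine ⟨fun s hw => ?_, fun s hw h => ?_, ?_⟩
  · rw [← isAntipal_iff]
    exact ⟨isAntipal_of_subset hw, subset_of_isAntipal⟩
  · have he := supp_aleph_eq_insert hw h
    have hn : (k : ZMod (2*k+1)) ∉ supp k s := by simp [mem_supp, centre_of_subset h]
    exact ⟨he, he ▸ Finset.ssubset_insert hn⟩
  · have hS : {s : ZMod (2*k+1) → Bool | wt k s = k ∧ supp k s ⊆ supp k (aleph k s)}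
        = Set.range (extendHalf k) := by
      rw [range_extendHalf]
      ext s
      exact ⟨fun h => isAntipal_of_subset h.1 h.2,
        fun h => ⟨wt_of_isAntipal h, subset_of_isAntipal h⟩⟩
    rw [hS, ← Nat.card_coe_set_eq, Nat.card_range_of_injective (extendHalf_injective k)]
    simp
end

section
/- (Theorem 2: lexical 1-factorization of M_k.) Let k ≥ 1 and n = 2k+1. Color each edge of the middle-levels graph M_k joining a weight-k string s to the string obtained from s by flipping a position j with s(j) = false by the lexical color L(σ_{−j} s) ∈ {0, …, k}. Then for every color c ∈ {0, …, k}, the set of edges of color c is a perfect matching of M_k; that is, the lexical coloring is a proper (k+1)-edge-coloring of M_k whose color classes form a 1-factorization of M_k. -/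
/-- The rotation `σ_t`: `(σ_t s)(i) = s(i − t)`. -/
def rot (k : ℕ) (t : ZMod (2*k+1)) (s : ZMod (2*k+1) → Bool) : ZMod (2*k+1) → Bool :=
  fun i => s (i - t)

/-- The lexical value `L(b)` of a binary `(2k+1)`-string `b` (intended for `b`
of weight `k` with `b 0 = false`): the number of indices `i ∈ {1, …, 2k}` with
`b i = false` such that among the entries at `1, …, i−1` the `false` entries
are at least as many as the `true` ones. -/
def lex (k : ℕ) (b : ZMod (2*k+1) → Bool) : ℕ :=
  ((Finset.Icc 1 (2*k)).filter fun i : ℕ =>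
    b (i : ZMod (2*k+1)) = false ∧
    ((Finset.Ico 1 i).filter fun j : ℕ => b (j : ZMod (2*k+1)) = true).card ≤
      ((Finset.Ico 1 i).filter fun j : ℕ => b (j : ZMod (2*k+1)) = false).card).card

/-! ### Ranks with respect to an injective key -/

/-- In a finite set of `m` elements with distinct keys, every rank below `m` is attained exactly
once, where the rank of an element is the number of elements with larger key. -/
theorem existsUnique_rank {α : Type*} [Fintype α] [DecidableEq α] (p : α → Prop) [DecidablePred p]
    (f : α → ℤ) (hf : Function.Injective f) (m c : ℕ)
    (hm : (Finset.univ.filter p).card = m) (hc : c < m) :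
    ∃! j, p j ∧ (Finset.univ.filter fun i => p i ∧ f j < f i).card = c := by
  set r : α → ℕ := fun j => (Finset.univ.filter fun i => p i ∧ f j < f i).card with hr
  have hlt : ∀ i j, p i → f j < f i → r i < r j := by
    intro i j hi h
    apply Finset.card_lt_card
    rw [Finset.ssubset_iff_of_subset]
    · exact ⟨i, by simp [hi, h], by simp⟩
    · intro x hx
      simp only [Finset.mem_filter, Finset.mem_univ, true_and] at hx ⊢
      exact ⟨hx.1, h.trans hx.2⟩
  have hinj : ∀ i j, p i → p j → r i = r j → i = j := by
    intro i j hi hj h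
    rcases lt_trichotomy (f i) (f j) with h1 | h1 | h1
    · exact absurd (hlt j i hj h1) (by omega)
    · exact hf h1
    · exact absurd (hlt i j hi h1) (by omega)
  have hmaps : ∀ i ∈ Finset.univ.filter p, r i ∈ Finset.range m := by
    intro i hi
    rw [Finset.mem_range, ← hm]
    apply Finset.card_lt_card
    rw [Finset.ssubset_iff_of_subset]
    · exact ⟨i, hi, by simp⟩
    · intro x hx
      simp only [Finset.mem_filter, Finset.mem_univ, true_and] at hx ⊢
      exact hx.1
  have hsurj := Finset.surj_on_of_inj_on_of_card_le (s := Finset.univ.filter p)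
    (t := Finset.range m) (fun i _ => r i) hmaps
    (fun i j hi hj h => hinj i j (by simpa using hi) (by simpa using hj) h)
    (by simp [hm]) c (by simpa using hc)
  obtain ⟨j, hj, hcj⟩ := hsurj
  have hj' : p j := by simpa using hj
  exact ⟨j, ⟨hj', hcj.symm⟩, fun i hi => hinj i j hi.1 hj' (by rw [hi.2.symm] at hcj; exact hcj)⟩

/-! ### Periodic lattice paths and the tilted key -/

/-- The step of the lattice path belonging to an entry: `false` goes up, `true` goes down. -/
def step (b : Bool) : ℤ := if b then -1 else 1

/-- The height of the lattice path of the periodic extension of `u`, before step `x`. -/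
def height (k : ℕ) (u : ZMod (2*k+1) → Bool) (x : ℕ) : ℤ :=
  ∑ l ∈ Finset.range x, step (u (l : ZMod (2*k+1)))

/-- The tilted height `n·H(x) - ε·x` at the representative of `x` in `{0, …, 2k}`. -/
def key (k : ℕ) (ε : ℤ) (u : ZMod (2*k+1) → Bool) (z : ZMod (2*k+1)) : ℤ :=
  (2*k+1 : ℤ) * height k u z.val - ε * z.val

theorem height_succ (k : ℕ) (u : ZMod (2*k+1) → Bool) (x : ℕ) :
    height k u (x+1) = height k u x + step (u (x : ZMod (2*k+1))) := by
  simp [height, Finset.sum_range_succ]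

theorem height_period (k : ℕ) (u : ZMod (2*k+1) → Bool) :
    height k u (2*k+1) = (2*k+1 : ℤ) - 2 * (wt k u : ℤ) := by
  have h1 : height k u (2*k+1) = ∑ z : ZMod (2*k+1), step (u z) := by
    unfold height
    refine Finset.sum_nbij' (fun l => (l : ZMod (2*k+1))) (fun z => z.val) ?_ ?_ ?_ ?_ ?_
    · simp
    · intro z _
      simpa using ZMod.val_lt z
    · intro l hl
      exact ZMod.val_cast_of_lt (by simpa using hl)
    · intro z _
      simp
    · simp
  have h2 : ∀ b, step b = 1 - 2 * (if b = true then 1 else 0) := by decide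
  rw [h1, Finset.sum_congr rfl (fun z _ => h2 (u z)), Finset.sum_sub_distrib, ← Finset.mul_sum,
    Finset.sum_boole]
  simp [wt, supp, ZMod.card]

theorem height_add_period (k : ℕ) (u : ZMod (2*k+1) → Bool) (x : ℕ) :
    height k u (x + (2*k+1)) = height k u x + ((2*k+1 : ℤ) - 2 * (wt k u : ℤ)) := by
  induction x with
  | zero => rw [zero_add, height_period]; simp [height]
  | succ x ih =>
    have h : ((x + (2*k+1) : ℕ) : ZMod (2*k+1)) = x := by
      rw [Nat.cast_add, ZMod.natCast_self, add_zero]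
    rw [show x + 1 + (2*k+1) = (x + (2*k+1)) + 1 by ring, height_succ, height_succ, ih, h]
    ring

theorem key_natCast (k : ℕ) (ε : ℤ) (u : ZMod (2*k+1) → Bool)
    (hε : (2*k+1 : ℤ) - 2 * (wt k u : ℤ) = ε) (x : ℕ) :
    key k ε u (x : ZMod (2*k+1)) = (2*k+1 : ℤ) * height k u x - ε * x := by
  induction x using Nat.strong_induction_on with
  | _ x ih =>
    by_cases h : x < 2*k+1
    · rw [key, ZMod.val_cast_of_lt h]
    · obtain ⟨y, rfl⟩ : ∃ y, x = y + (2*k+1) := ⟨x - (2*k+1), by omega⟩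
      rw [height_add_period, Nat.cast_add, ZMod.natCast_self, add_zero, ih y (by omega), hε]
      push_cast
      ring

theorem key_injective (k : ℕ) (ε : ℤ) (hε : ε = 1 ∨ ε = -1) (u : ZMod (2*k+1) → Bool) :
    Function.Injective (key k ε u) := by
  intro y z h
  apply ZMod.val_injective
  have hy := ZMod.val_lt y
  have hz := ZMod.val_lt z
  unfold key at h
  have hd : (2*k+1 : ℤ) ∣ (y.val : ℤ) - z.val := by
    rcases hε with rfl | rfl
    · exact ⟨height k u y.val - height k u z.val, by linarith⟩
    · exact ⟨height k u z.val - height k u y.val, by linarith⟩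
  have := Int.eq_zero_of_abs_lt_dvd hd (by rw [abs_lt]; constructor <;> omega)
  omega

/-- Comparing keys of `j` and of a later position in the same window of length `2k+1`. -/
theorem key_lt_key_iff (k : ℕ) (ε : ℤ) (u : ZMod (2*k+1) → Bool)
    (hε : (2*k+1 : ℤ) - 2 * (wt k u : ℤ) = ε) (j : ZMod (2*k+1)) (i : ℕ) :
    key k ε u j < key k ε u ((i : ZMod (2*k+1)) + j) ↔
      ε * i < (2*k+1 : ℤ) * (height k u (j.val + i) - height k u j.val) := by
  have h : (i : ZMod (2*k+1)) + j = ((j.val + i : ℕ) : ZMod (2*k+1)) := by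
    push_cast
    rw [ZMod.natCast_zmod_val]
    exact add_comm _ _
  rw [h, key_natCast k ε u hε, key]
  push_cast
  constructor <;> intro h <;> linarith

/-! ### The window of positions after a flipped position -/

/-- The nonzero residues translated by `j` run once through all positions other than `j`. -/
theorem card_window (k : ℕ) (p : ZMod (2*k+1) → Prop) [DecidablePred p] (j : ZMod (2*k+1))
    (hj : ¬ p j) :
    ((Finset.Icc 1 (2*k)).filter fun i : ℕ => p ((i : ZMod (2*k+1)) + j)).card =
      (Finset.univ.filter p).card := by
  refine Finset.card_nbij' (fun i => (i : ZMod (2*k+1)) + j) (fun z => (z - j).val) ?_ ?_ ?_ ?_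
  · intro i hi
    simpa using (Finset.mem_filter.1 hi).2
  · intro z hz
    have hz' : p z := by simpa using hz
    have hne : (z - j).val ≠ 0 := by
      rw [Ne, ZMod.val_eq_zero, sub_eq_zero]
      rintro rfl
      exact hj hz'
    have := ZMod.val_lt (z - j)
    simp only [Finset.coe_filter, Set.mem_ofPred_eq, Finset.mem_Icc]
    refine ⟨by omega, ?_⟩
    rw [ZMod.natCast_zmod_val, sub_add_cancel]
    exact hz'
  · intro i hi
    have := (Finset.mem_Icc.1 (Finset.mem_filter.1 hi).1)
    simp only [add_sub_cancel_right]
    exact ZMod.val_cast_of_lt (by omega)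
  · intro z _
    simp

theorem sum_step (g : ℕ → Bool) (S : Finset ℕ) :
    ∑ l ∈ S, step (g l) =
      ((S.filter fun l => g l = false).card : ℤ) - ((S.filter fun l => g l = true).card : ℤ) := by
  have h : ∀ b, step b = (if b = false then 1 else 0) - (if b = true then 1 else 0) := by decide
  rw [Finset.sum_congr rfl (fun l _ => h (g l)), Finset.sum_sub_distrib, Finset.sum_boole,
    Finset.sum_boole]

/-- The up-steps starting at height `≥ 0` outnumber the down-steps ending at height `≥ 0` by the
positive part of the final height. -/
theorem up_sub_down (g : ℕ → Bool) (m : ℕ) :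
    (((Finset.Icc 1 m).filter fun i => g i = false ∧
        0 ≤ ∑ l ∈ Finset.Ico 1 i, step (g l)).card : ℤ) -
      ((Finset.Icc 1 m).filter fun i => g i = true ∧
        1 ≤ ∑ l ∈ Finset.Ico 1 i, step (g l)).card =
      max (∑ l ∈ Finset.Ico 1 (m+1), step (g l)) 0 := by
  induction m with
  | zero => simp
  | succ m ih =>
    rw [Finset.sum_Ico_succ_top (by omega : 1 ≤ m + 1),
      ← Finset.insert_Icc_right_eq_Icc_add_one (by omega : 1 ≤ m + 1)]
    rw [Finset.filter_insert, Finset.filter_insert]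
    have hn : ∀ p : ℕ → Prop, ∀ [DecidablePred p], m + 1 ∉ (Finset.Icc 1 m).filter p := by
      intro p _ h
      have := (Finset.mem_Icc.1 (Finset.mem_filter.1 h).1).2
      omega
    generalize hP : ∑ l ∈ Finset.Ico 1 (m+1), step (g l) = P at *
    have hs1 : step true = -1 := rfl
    have hs2 : step false = 1 := rfl
    cases hg : g (m+1)
    · by_cases h0 : 0 ≤ P
      · simp only [h0, and_self, if_true, Bool.false_eq_true, false_and, if_false,
          Finset.card_insert_of_notMem (hn _), hs2]
        push_cast
        omega
      · simp only [h0, and_false, if_false, Bool.false_eq_true, false_and, hs2]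
        omega
    · by_cases h0 : 1 ≤ P
      · simp only [h0, and_self, if_true, Bool.true_eq_false, false_and, if_false,
          Finset.card_insert_of_notMem (hn _), hs1]
        push_cast
        omega
      · simp only [h0, and_false, if_false, Bool.true_eq_false, false_and, hs1]
        omega

theorem lex_eq (k : ℕ) (b : ZMod (2*k+1) → Bool) :
    lex k b = ((Finset.Icc 1 (2*k)).filter fun i : ℕ => b (i : ZMod (2*k+1)) = false ∧
      0 ≤ ∑ l ∈ Finset.Ico 1 i, step (b (l : ZMod (2*k+1)))).card := by
  unfold lex
  congr 1
  apply Finset.filter_congr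
  intro i _
  rw [sum_step (fun l => b (l : ZMod (2*k+1)))]
  simp only [sub_nonneg, Nat.cast_le]

/-- Heights of the path started just after position `j` are differences of heights of the
original path. -/
theorem sum_window (k : ℕ) (u : ZMod (2*k+1) → Bool) (j : ZMod (2*k+1)) (i : ℕ) (hi : 1 ≤ i) :
    ∑ l ∈ Finset.Ico 1 i, step (u ((l : ZMod (2*k+1)) + j)) =
      height k u (j.val + i) - height k u j.val - step (u j) := by
  induction i, hi using Nat.le_induction with
  | base =>
    rw [height_succ, ZMod.natCast_zmod_val]
    simp
  | succ i hi ih =>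
    rw [Finset.sum_Ico_succ_top hi, ih, ← add_assoc, height_succ]
    push_cast
    rw [ZMod.natCast_zmod_val, add_comm j]
    ring

/-! ### Lexical colors as ranks -/

/-- For a lower vertex, the color of flipping `j` is the rank of `j` among the up-steps. -/
theorem lex_lower (k : ℕ) (s : ZMod (2*k+1) → Bool) (hs : wt k s = k) (j : ZMod (2*k+1))
    (hj : s j = false) :
    lex k (rot k (-j) s) =
      (Finset.univ.filter fun i => s i = false ∧ key k 1 s j < key k 1 s i).card := by
  rw [← card_window k (fun i => s i = false ∧ key k 1 s j < key k 1 s i) j (by simp), lex_eq]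
  congr 1
  apply Finset.filter_congr
  intro i hi
  have hi' := Finset.mem_Icc.1 hi
  simp only [rot, sub_neg_eq_add]
  rw [sum_window k s j i hi'.1, key_lt_key_iff k 1 s (by rw [hs]; ring), hj]
  refine and_congr_right fun _ => ?_
  generalize height k s (j.val + i) - height k s j.val = d
  simp only [step]
  constructor
  · intro h
    have : 1 ≤ d := by simpa using h
    have : (i : ℤ) ≤ 2 * k := by exact_mod_cast hi'.2
    nlinarith
  · intro h
    have : 0 < d := by
      by_contra! h0
      have : (1 : ℤ) ≤ i := by exact_mod_cast hi'.1
      nlinarith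
    simp
    omega

/-- For an upper vertex, the color of flipping `j` is the rank of `j` among the down-steps. -/
theorem lex_upper (k : ℕ) (t : ZMod (2*k+1) → Bool) (ht : wt k t = k + 1) (j : ZMod (2*k+1))
    (hj : t j = true) :
    lex k (rot k (-j) (Function.update t j false)) =
      (Finset.univ.filter fun i => t i = true ∧ key k (-1) t j < key k (-1) t i).card := by
  have hw : (2*k+1 : ℤ) - 2 * (wt k t : ℤ) = -1 := by rw [ht]; push_cast; ring
  -- Flipping position `j` does not affect the window of the other `2k` entries.
  have hb : ∀ l : ℕ, 1 ≤ l → l ≤ 2*k →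
      rot k (-j) (Function.update t j false) (l : ZMod (2*k+1)) = t ((l : ZMod (2*k+1)) + j) := by
    intro l h1 h2
    simp only [rot, sub_neg_eq_add]
    apply Function.update_of_ne
    intro h
    have h0 : (l : ZMod (2*k+1)) = 0 := by simpa using h
    rw [ZMod.natCast_eq_zero_iff] at h0
    have := Nat.le_of_dvd h1 h0
    omega
  rw [← card_window k (fun i => t i = true ∧ key k (-1) t j < key k (-1) t i) j (by simp), lex_eq]
  have hud := up_sub_down (fun l => t ((l : ZMod (2*k+1)) + j)) (2*k)
  -- The path through the window is closed.
  rw [sum_window k t j (2*k+1) (by omega), height_add_period, hw, hj] at hud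
  have hclosed : max (height k t j.val + -1 - height k t j.val - step true) 0 = 0 := by
    simp [step]
  rw [hclosed, sub_eq_zero, Nat.cast_inj] at hud
  refine Eq.trans ?_ (hud.trans ?_)
  · congr 1
    apply Finset.filter_congr
    intro i hi
    have hi' := Finset.mem_Icc.1 hi
    rw [hb i hi'.1 hi'.2, Finset.sum_congr rfl]
    intro l hl
    have hl' := Finset.mem_Ico.1 hl
    rw [hb l hl'.1 (by omega)]
  · congr 1
    apply Finset.filter_congr
    intro i hi
    have hi' := Finset.mem_Icc.1 hi
    rw [sum_window k t j i hi'.1, key_lt_key_iff k (-1) t hw, hj]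
    refine and_congr_right fun _ => ?_
    generalize height k t (j.val + i) - height k t j.val = d
    simp only [step]
    have h1 : (1 : ℤ) ≤ i := by exact_mod_cast hi'.1
    have h2 : (i : ℤ) ≤ 2 * k := by exact_mod_cast hi'.2
    constructor
    · intro h
      have : 0 ≤ d := by simpa using h
      nlinarith
    · intro h
      have : 0 ≤ d := by
        by_contra! h0
        nlinarith
      simp
      omega

/-- Theorem 2 (lexical 1-factorization of `M_k`): for every color `c ≤ k`,
every vertex of the middle-levels graph `M_k` is incident with exactly one
edge of lexical color `c`; i.e. the color classes of the lexical coloring are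
perfect matchings forming a 1-factorization of `M_k`.  An edge is encoded by
its weight-`k` endpoint `s` together with the flipped position `j`
(`s j = false`, the other endpoint being `Function.update s j true`), and its
color is `L(σ_{−j} s)`. -/
theorem stmt15 (k : ℕ) (hk : 1 ≤ k) (c : ℕ) (hc : c ≤ k) :
    (∀ s : ZMod (2*k+1) → Bool, wt k s = k →
      ∃! j : ZMod (2*k+1), s j = false ∧ lex k (rot k (-j) s) = c) ∧
    (∀ t : ZMod (2*k+1) → Bool, wt k t = k + 1 →
      ∃! j : ZMod (2*k+1), t j = true ∧
        lex k (rot k (-j) (Function.update t j false)) = c) := by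
  constructor
  · intro s hs
    have hcard : (Finset.univ.filter fun i => s i = false).card = k + 1 := by
      have h := Finset.card_filter_add_card_filter_not (s := Finset.univ) (fun i => s i = true)
      have h' : (Finset.univ.filter fun i => s i = true).card = k := hs
      simp only [Bool.not_eq_true, Finset.card_univ, ZMod.card] at h
      omega
    have h := existsUnique_rank (fun i => s i = false) (key k 1 s)
      (key_injective k 1 (Or.inl rfl) s) (k+1) c hcard (by omega)
    refine (existsUnique_congr fun j => and_congr_right fun hj => ?_).2 h
    rw [lex_lower k s hs j hj]
  · intro t ht
    have h := existsUnique_rank (fun i => t i = true) (key k (-1) t)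
      (key_injective k (-1) (Or.inr rfl) t) (k+1) c ht (by omega)
    refine (existsUnique_congr fun j => and_congr_right fun hj => ?_).2 h
    rw [lex_upper k t ht j hj]
end
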